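/- Suppose 1/s₁ + 1/s₂ = 1 and set k₁(a) = ⌊2k(a)/3⌋. Then lim_{a→0⁺} 1/(a·(s₁+pa)^{k₁(a)}) = 0. -/

import Mathlib

open MeasureTheory Filter Topology

/-- The W-like map `W_a` with parameters `s₁ s₂ p q r` and perturbation `a`. -/
noncomputable def Wmap (s₁ s₂ p q r a : ℝ) (x : ℝ) : ℝ :=
  if x < 1/2 - (1/2 + r*a)/(s₁ + p*a) then
    1 - (2*(s₁ + p*a)/(s₁ - 1 + p*a - 2*r*a)) * x
  else if x < 1/2 then
    (s₁ + p*a)*(x - 1/2) + 1/2 + r*a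
  else if x < 1/2 + (1/2 + r*a)/(s₂ + q*a) then
    -(s₂ + q*a)*(x - 1/2) + 1/2 + r*a
  else
    1 + (2*(s₂ + q*a)/(s₂ - 1 + q*a - 2*r*a)) * (x - 1)

/-- `k(a)`: the first iterate `j ≥ 1` at which the trajectory of `1/2` under `W_a`
drops below `1/2 − (1/2+ra)/(s₁+pa)`. -/
noncomputable def kIndex (s₁ s₂ p q r a : ℝ) : ℕ :=
  sInf {j : ℕ | 1 ≤ j ∧
    (Wmap s₁ s₂ p q r a)^[j] (1/2) ≤ 1/2 - (1/2 + r*a)/(s₁ + p*a)}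

/-- `k₁(a) = ⌊2k(a)/3⌋`, the integer part of `2k(a)/3`. -/
noncomputable def kIndex1 (s₁ s₂ p q r a : ℝ) : ℕ :=
  2 * kIndex s₁ s₂ p q r a / 3

/-!
Write `A = s₁ + pa`, `B = s₂ + qa` and `ρ = ra`. The orbit of `1/2` first visits `1/2 + ρ` and then
lands at distance `ρ((A - 1)(B - 1) - 1)/(A - 1)` below the repelling fixed point `1/2 - ρ/(A - 1)`
of the second branch. There it escapes downwards, its distance to the fixed point being multiplied
by `A` at each step, until it crosses the threshold, which stays at distance about `1/(2s₁)`.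
Since `1/s₁ + 1/s₂ = 1` means `(s₁ - 1)(s₂ - 1) = 1`, and `(A - 1)(B - 1)` has derivative
`p(s₂ - 1) + q(s₁ - 1) > 0` at `a = 0`, the initial distance is of order `a²`. So `A ^ k(a)` is at
least of order `a⁻²`, and `a * A ^ ⌊θk(a)⌋` diverges for every `θ > 1/2`.
-/

section AffineEscape

variable {f : ℝ → ℝ} {A c x₀ y : ℝ}

lemma iterate_eq_sub_pow_mul (hf : ∀ x ∈ Set.Ioo c x₀, f x = x₀ - A * (x₀ - x)) (hA : 0 < A)
    (hy : y < x₀) {n : ℕ} (hn : ∀ j < n, c < f^[j] y) :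
    f^[n] y = x₀ - A ^ n * (x₀ - y) := by
  induction n with
  | zero => simp
  | succ n ih =>
    have hprev := ih fun j hj => hn j (hj.trans n.lt_succ_self)
    have hdist : 0 < A ^ n * (x₀ - y) := mul_pos (pow_pos hA n) (sub_pos.2 hy)
    rw [Function.iterate_succ_apply', hf _ ⟨hn n n.lt_succ_self, by linarith⟩, hprev]
    ring

lemma exists_iterate_le (hf : ∀ x ∈ Set.Ioo c x₀, f x = x₀ - A * (x₀ - x)) (hA : 1 < A)
    (hy : y < x₀) : ∃ n, f^[n] y ≤ c := by
  by_contra! hstay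
  obtain ⟨n, hn⟩ := pow_unbounded_of_one_lt ((x₀ - c) / (x₀ - y)) hA
  rw [div_lt_iff₀ (sub_pos.2 hy)] at hn
  have hiter := iterate_eq_sub_pow_mul hf (by linarith) hy fun j (_ : j < n) => hstay j
  linarith [hstay n]

lemma exists_first_iterate_le (hf : ∀ x ∈ Set.Ioo c x₀, f x = x₀ - A * (x₀ - x)) (hA : 1 < A)
    (hy : y < x₀) :
    ∃ n, IsLeast {j | f^[j] y ≤ c} n ∧ x₀ - c ≤ A ^ n * (x₀ - y) := by
  classical
  have hex := exists_iterate_le hf hA hy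
  have hiter := iterate_eq_sub_pow_mul hf (by linarith) hy fun j (hj : j < Nat.find hex) =>
    not_le.1 (Nat.find_min hex hj)
  exact ⟨Nat.find hex, Nat.isLeast_find hex, by linarith [Nat.find_spec hex]⟩

end AffineEscape

section Orbit

variable {s₁ s₂ p q r a : ℝ}

lemma Wmap_half (hA : 0 < s₁ + p * a) (hB : 0 < s₂ + q * a) (hρ : 0 < r * a) :
    Wmap s₁ s₂ p q r a (1 / 2) = 1 / 2 + r * a := by
  have hleft : 0 < (1 / 2 + r * a) / (s₁ + p * a) := by positivity
  have hright : 0 < (1 / 2 + r * a) / (s₂ + q * a) := by positivity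
  rw [Wmap, if_neg (by linarith), if_neg (lt_irrefl _), if_pos (by linarith)]
  ring

lemma Wmap_half_add (hA : 0 < s₁ + p * a) (hB : 0 < s₂ + q * a) (hρ : 0 < r * a)
    (hBρ : r * a * (s₂ + q * a) < 1 / 2 + r * a) :
    Wmap s₁ s₂ p q r a (1 / 2 + r * a) = 1 / 2 + r * a - (s₂ + q * a) * (r * a) := by
  have hleft : 0 < (1 / 2 + r * a) / (s₁ + p * a) := by positivity
  have hright : r * a < (1 / 2 + r * a) / (s₂ + q * a) := (lt_div_iff₀ hB).2 hBρ
  rw [Wmap, if_neg (by linarith), if_neg (by linarith), if_pos (by linarith)]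
  ring

/-- The fixed point of the affine map `x ↦ A * (x - 1/2) + 1/2 + ρ`, which is the second branch of
`Wmap` when `A = s₁ + p * a` and `ρ = r * a`. -/
noncomputable def branchFixedPt (A ρ : ℝ) : ℝ :=
  1 / 2 - ρ / (A - 1)

lemma Wmap_eq_branchFixedPt_sub (hA : 1 < s₁ + p * a) {x : ℝ}
    (hx : x ∈ Set.Ico (1 / 2 - (1 / 2 + r * a) / (s₁ + p * a)) (1 / 2)) :
    Wmap s₁ s₂ p q r a x =
      branchFixedPt (s₁ + p * a) (r * a) -
        (s₁ + p * a) * (branchFixedPt (s₁ + p * a) (r * a) - x) := by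
  have hA' : s₁ + p * a - 1 ≠ 0 := by linarith
  rw [Wmap, if_neg hx.1.not_gt, if_pos hx.2, branchFixedPt]
  field_simp
  ring

lemma branchFixedPt_sub_eq {A : ℝ} (hA : A ≠ 1) (B ρ : ℝ) :
    branchFixedPt A ρ - (1 / 2 + ρ - B * ρ) = ρ * ((A - 1) * (B - 1) - 1) / (A - 1) := by
  have hA' : A - 1 ≠ 0 := sub_ne_zero.2 hA
  rw [branchFixedPt]
  field_simp
  ring

lemma kIndex_eq_add_two {n : ℕ} (hA : 0 < s₁ + p * a) (hB : 0 < s₂ + q * a) (hρ : 0 < r * a)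
    (hBρ : r * a * (s₂ + q * a) < 1 / 2 + r * a)
    (hn : IsLeast {j | (Wmap s₁ s₂ p q r a)^[j] (1 / 2 + r * a - (s₂ + q * a) * (r * a)) ≤
      1 / 2 - (1 / 2 + r * a) / (s₁ + p * a)} n) :
    kIndex s₁ s₂ p q r a = n + 2 := by
  have horbit (j : ℕ) : (Wmap s₁ s₂ p q r a)^[j + 2] (1 / 2) =
      (Wmap s₁ s₂ p q r a)^[j] (1 / 2 + r * a - (s₂ + q * a) * (r * a)) := by
    rw [Function.iterate_succ_apply, Function.iterate_succ_apply, Wmap_half hA hB hρ,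
      Wmap_half_add hA hB hρ hBρ]
  refine IsLeast.csInf_eq ⟨⟨by lia, (horbit n).trans_le hn.1⟩, ?_⟩
  rintro (_ | _ | j) ⟨hj, hle⟩
  · lia
  · have hleft : 0 < (1 / 2 + r * a) / (s₁ + p * a) := by positivity
    rw [zero_add, Function.iterate_one, Wmap_half hA hB hρ] at hle
    linarith
  · exact Nat.add_le_add_right (hn.2 ((horbit j).symm.trans_le hle)) 2

lemma sub_le_pow_kIndex_mul (hA : 1 < s₁ + p * a) (hρ : 0 < r * a)
    (hAB : 1 < (s₁ + p * a - 1) * (s₂ + q * a - 1))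
    (hBρ : r * a * (s₂ + q * a) < 1 / 2 + r * a) :
    (1 / 2 + r * a) / (s₁ + p * a) - r * a / (s₁ + p * a - 1) ≤
      (s₁ + p * a) ^ kIndex s₁ s₂ p q r a *
        (r * a * ((s₁ + p * a - 1) * (s₂ + q * a - 1) - 1) / (s₁ + p * a - 1)) := by
  have hA₁ : 0 < s₁ + p * a - 1 := sub_pos.2 hA
  have hA₀ : 0 < s₁ + p * a := one_pos.trans hA
  have hB₀ : 0 < s₂ + q * a := by linarith [pos_of_mul_pos_right (one_pos.trans hAB) hA₁.le]
  have hgap := branchFixedPt_sub_eq hA.ne' (s₂ + q * a) (r * a)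
  have hgap_pos : 0 < r * a * ((s₁ + p * a - 1) * (s₂ + q * a - 1) - 1) / (s₁ + p * a - 1) :=
    div_pos (mul_pos hρ (sub_pos.2 hAB)) hA₁
  have hfix : branchFixedPt (s₁ + p * a) (r * a) < 1 / 2 := sub_lt_self _ (div_pos hρ hA₁)
  obtain ⟨n, hn, hle⟩ := exists_first_iterate_le (f := Wmap s₁ s₂ p q r a)
    (fun x hx => Wmap_eq_branchFixedPt_sub hA ⟨hx.1.le, hx.2.trans hfix⟩) hA
    (sub_pos.1 (hgap_pos.trans_eq hgap.symm))
  rw [hgap] at hle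
  calc (1 / 2 + r * a) / (s₁ + p * a) - r * a / (s₁ + p * a - 1)
      = branchFixedPt (s₁ + p * a) (r * a) - (1 / 2 - (1 / 2 + r * a) / (s₁ + p * a)) := by
        rw [branchFixedPt]; ring
    _ ≤ _ := hle
    _ ≤ _ := by
      rw [kIndex_eq_add_two hA₀ hB₀ hρ hBρ hn]
      gcongr
      · exact hA.le
      · lia

end Orbit

section EscapeTimeExponent

lemma pow_le_pow_mul_pow_of_le {ε A c : ℝ} {d k m n : ℕ} (hε : 0 ≤ ε) (hA : 1 ≤ A) (hc : 0 ≤ c)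
    (hck : c ≤ ε ^ d * A ^ k) (hn : 0 < n) (hmn : n ≤ d * m) :
    c ^ m ≤ ε ^ (d * m - n) * (ε * A ^ (m * k / n) * A) ^ n := by
  have hexp : m * k ≤ (m * k / n + 1) * n := (Nat.lt_mul_of_div_lt (Nat.lt_succ_self _) hn).le
  calc c ^ m ≤ (ε ^ d * A ^ k) ^ m := by gcongr
    _ = ε ^ (d * m) * A ^ (m * k) := by ring
    _ ≤ ε ^ (d * m) * A ^ ((m * k / n + 1) * n) := by gcongr
    _ = ε ^ (d * m - n) * (ε * A ^ (m * k / n) * A) ^ n := by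
      rw [← pow_sub_mul_pow ε hmn, pow_mul, pow_succ]
      ring

variable {ι : Type*} {l : Filter ι}

lemma tendsto_atTop_of_tendsto_pow_atTop {f : ι → ℝ} {n : ℕ} (hn : n ≠ 0)
    (hf : ∀ᶠ i in l, 0 ≤ f i) (hpow : Tendsto (fun i => f i ^ n) l atTop) :
    Tendsto f l atTop := by
  refine tendsto_atTop.2 fun b => ?_
  filter_upwards [hf, hpow.eventually_ge_atTop (|b| ^ n)] with i hi hbi
  exact (le_abs_self b).trans (le_of_pow_le_pow_left₀ hn hi hbi)

lemma tendsto_mul_pow_div_atTop {ε A : ι → ℝ} {k : ι → ℕ} {c s : ℝ} {d m n : ℕ}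
    (hε : Tendsto ε l (𝓝[>] 0)) (hA : Tendsto A l (𝓝 s)) (hs : 1 < s) (hc : 0 < c)
    (hk : ∀ᶠ i in l, c ≤ ε i ^ d * A i ^ k i) (hn : 0 < n) (hmn : n < d * m) :
    Tendsto (fun i => ε i * A i ^ (m * k i / n)) l atTop := by
  have hε_pos : ∀ᶠ i in l, 0 < ε i := hε.eventually self_mem_nhdsWithin
  have hA_gt : ∀ᶠ i in l, 1 < A i := hA.eventually_const_lt hs
  have hlower : Tendsto (fun i => c ^ m * (ε i)⁻¹ ^ (d * m - n)) l atTop :=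
    ((tendsto_pow_atTop (Nat.sub_ne_zero_of_lt hmn)).comp
      hε.inv_tendsto_nhdsGT_zero).const_mul_atTop (pow_pos hc m)
  have hpow : Tendsto (fun i => (ε i * A i ^ (m * k i / n) * A i) ^ n) l atTop := by
    refine tendsto_atTop_mono' l ?_ hlower
    filter_upwards [hk, hε_pos, hA_gt] with i hki hεi hAi
    rw [inv_pow, ← div_eq_mul_inv, div_le_iff₀' (pow_pos hεi _)]
    exact pow_le_pow_mul_pow_of_le hεi.le hAi.le hc.le hki hn hmn.le
  have hmul : Tendsto (fun i => ε i * A i ^ (m * k i / n) * A i) l atTop := by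
    refine tendsto_atTop_of_tendsto_pow_atTop hn.ne' ?_ hpow
    filter_upwards [hε_pos, hA_gt] with i hεi hAi
    positivity
  refine (hmul.atTop_mul_pos (inv_pos.2 (one_pos.trans hs))
    (hA.inv₀ (one_pos.trans hs).ne')).congr' ?_
  filter_upwards [hA_gt] with i hAi
  exact mul_inv_cancel_right₀ (one_pos.trans hAi).ne' _

end EscapeTimeExponent

section ConjugateSlopes

variable {s₁ s₂ p q r : ℝ}

lemma slope_sub_one_mul_sub_one_sub_one (hs : s₁.HolderConjugate s₂) (p q a : ℝ) :
    (s₁ + p * a - 1) * (s₂ + q * a - 1) - 1 =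
      a * (p * (s₂ - 1) + q * (s₁ - 1) + p * q * a) := by
  linear_combination hs.mul_eq_add

lemma tendsto_affine_nhdsGT_zero (b c : ℝ) : Tendsto (fun a => b + c * a) (𝓝[>] 0) (𝓝 b) :=
  tendsto_nhdsWithin_of_tendsto_nhds (Continuous.tendsto' (by fun_prop) _ _ (by simp))

lemma eventually_le_sq_mul_pow_kIndex_mul (hs : s₁.HolderConjugate s₂) (hr : 0 < r)
    (hpq : 0 < p * (s₂ - 1) + q * (s₁ - 1)) :
    ∀ᶠ a in 𝓝[>] (0 : ℝ),
      (1 / 2 + r * a) / (s₁ + p * a) - r * a / (s₁ + p * a - 1) ≤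
        a ^ 2 * (s₁ + p * a) ^ kIndex s₁ s₂ p q r a *
          (r * (p * (s₂ - 1) + q * (s₁ - 1) + p * q * a) / (s₁ + p * a - 1)) := by
  have hBρ : Tendsto (fun a => r * a * (s₂ + q * a) - r * a) (𝓝[>] 0) (𝓝 0) :=
    tendsto_nhdsWithin_of_tendsto_nhds (Continuous.tendsto' (by fun_prop) _ _ (by simp))
  filter_upwards [self_mem_nhdsWithin,
    (tendsto_affine_nhdsGT_zero s₁ p).eventually_const_lt hs.lt,
    (tendsto_affine_nhdsGT_zero _ (p * q)).eventually_const_lt hpq,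
    hBρ.eventually_lt_const one_half_pos] with a (ha : 0 < a) hA hgap hBρa
  have hexp := slope_sub_one_mul_sub_one_sub_one hs p q a
  have hAB : 1 < (s₁ + p * a - 1) * (s₂ + q * a - 1) :=
    sub_pos.1 (hexp ▸ mul_pos ha hgap)
  refine (sub_le_pow_kIndex_mul hA (mul_pos hr ha) hAB (sub_lt_iff_lt_add.1 hBρa)).trans_eq ?_
  rw [hexp]
  ring

lemma exists_eventually_le_sq_mul_pow_kIndex (hs : s₁.HolderConjugate s₂) (hr : 0 < r)
    (hpq : 0 < p * (s₂ - 1) + q * (s₁ - 1)) :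
    ∃ c > 0, ∀ᶠ a in 𝓝[>] (0 : ℝ), c ≤ a ^ 2 * (s₁ + p * a) ^ kIndex s₁ s₂ p q r a := by
  have hs₁ : 0 < s₁ := hs.pos
  have hs₁' : 0 < s₁ - 1 := hs.sub_one_pos
  have hA := tendsto_affine_nhdsGT_zero s₁ p
  have hρ : Tendsto (fun a => r * a) (𝓝[>] 0) (𝓝 0) := by
    simpa only [zero_add] using tendsto_affine_nhdsGT_zero 0 r
  have hdist : Tendsto (fun a => (1 / 2 + r * a) / (s₁ + p * a) - r * a / (s₁ + p * a - 1))
      (𝓝[>] 0) (𝓝 (1 / 2 / s₁)) := by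
    simpa only [zero_div, sub_zero, Pi.div_apply] using
      ((tendsto_affine_nhdsGT_zero (1 / 2) r).div hA hs₁.ne').sub
        (hρ.div (hA.sub_const 1) hs₁'.ne')
  have hcoef : Tendsto
      (fun a => r * (p * (s₂ - 1) + q * (s₁ - 1) + p * q * a) / (s₁ + p * a - 1))
      (𝓝[>] 0) (𝓝 (r * (p * (s₂ - 1) + q * (s₁ - 1)) / (s₁ - 1))) :=
    ((tendsto_affine_nhdsGT_zero _ (p * q)).const_mul r).div (hA.sub_const 1) hs₁'.ne'
  have hcoef_pos : 0 < r * (p * (s₂ - 1) + q * (s₁ - 1)) / (s₁ - 1) := by positivity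
  have hratio_pos : 0 < 1 / 2 / s₁ / (r * (p * (s₂ - 1) + q * (s₁ - 1)) / (s₁ - 1)) := by
    positivity
  obtain ⟨c, hc, hc_lt⟩ := exists_between hratio_pos
  refine ⟨c, hc, ?_⟩
  filter_upwards [(hdist.div hcoef hcoef_pos.ne').eventually_const_lt hc_lt,
    hcoef.eventually_const_lt hcoef_pos, eventually_le_sq_mul_pow_kIndex_mul hs hr hpq]
    with a hca hcoef_a hle
  exact hca.le.trans ((div_le_iff₀ hcoef_a).2 hle)

end ConjugateSlopes

theorem Wmap_inv_a_pow_k1_tendsto_zero_eq_one_general {s₁ s₂ p q r : ℝ} {m n : ℕ}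
    (hs : s₁.HolderConjugate s₂) (hr : 0 < r) (hpq : 0 < p * (s₂ - 1) + q * (s₁ - 1))
    (hn : 0 < n) (hmn : n < 2 * m) :
    Tendsto (fun a => 1 / (a * (s₁ + p * a) ^ (m * kIndex s₁ s₂ p q r a / n)))
      (𝓝[>] (0 : ℝ)) (𝓝 0) := by
  obtain ⟨c, hc, hk⟩ := exists_eventually_le_sq_mul_pow_kIndex hs hr hpq
  have hdiv := tendsto_mul_pow_div_atTop tendsto_id (tendsto_affine_nhdsGT_zero s₁ p) hs.lt hc hk
    hn hmn
  exact hdiv.inv_tendsto_atTop.congr fun a => (one_div _).symm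

/-- Lemma 3(IV): if `1/s₁ + 1/s₂ = 1`, then `1/(a·(s₁+pa)^{k₁(a)}) → 0` as `a → 0⁺`,
where `k₁(a) = ⌊2k(a)/3⌋`. -/
theorem Wmap_inv_a_pow_k1_tendsto_zero_eq_one
    (s₁ s₂ p q r : ℝ) (hs₁ : 1 < s₁) (hs₂ : 1 < s₂)
    (hp : 0 < p) (hq : 0 < q) (hr : 0 < r)
    (hsum : 1/s₁ + 1/s₂ = 1) :
    Tendsto (fun a => 1/(a * (s₁ + p*a)^(kIndex1 s₁ s₂ p q r a)))
      (𝓝[>] (0:ℝ)) (𝓝 0) :=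
  Wmap_inv_a_pow_k1_tendsto_zero_eq_one_general
    (Real.holderConjugate_iff.2 ⟨hs₁, by simpa only [one_div] using hsum⟩) hr
    (add_pos (mul_pos hp (sub_pos.2 hs₂)) (mul_pos hq (sub_pos.2 hs₁))) three_pos (by norm_num)
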